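/- There exists a 2-(24,4,1) packing with 42 blocks whose leave is a vertex-disjoint union of four cycles of length 3 and one cycle of length 12, covering all 24 points (leave type 3^4 12^1). -/

import Mathlib

/-!
Identify the points with `ℤ/24ℤ` and look for a packing invariant under translation by `6` whose
leave joins every even point `p` to `p ± 2` and every odd point `p` to `p ± 8`: the even points then
form one cycle of length 12, and the odd points four triangles. The blocks are the translates of
twelve base blocks, of which nine have four distinct translates and three are fixed by translation
by `12` and have only two, so there are `9 * 4 + 3 * 2 = 42` of them.

Because all translates are used, it suffices to compare translates of base blocks with base blocks,
and a pair of points is covered exactly when some translate of it lies in a base block.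
-/

/-- A 2-(24,4,1) packing: a collection of 4-element blocks on 24 points such that
every pair of distinct points lies in at most one block. -/
def IsPacking (B : Finset (Finset (Fin 24))) : Prop :=
  (∀ b ∈ B, b.card = 4) ∧
  ∀ p q : Fin 24, p ≠ q → ∀ b₁ ∈ B, ∀ b₂ ∈ B,
    p ∈ b₁ → q ∈ b₁ → p ∈ b₂ → q ∈ b₂ → b₁ = b₂

/-- Adjacency in the leave of a packing: the pair of distinct points is covered by no block. -/
def LeaveAdj (B : Finset (Finset (Fin 24))) (p q : Fin 24) : Prop :=
  p ≠ q ∧ ∀ b ∈ B, ¬ (p ∈ b ∧ q ∈ b)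

/-- The leave of the packing `B` is a vertex-disjoint union of cycles whose lengths are
given by the list `L`, covering all 24 points. -/
def LeaveIsCycleType (B : Finset (Finset (Fin 24))) (L : List ℕ) : Prop :=
  ∃ f : (i : Fin L.length) → ZMod (L.get i) → Fin 24,
    Function.Bijective (fun x : Σ i : Fin L.length, ZMod (L.get i) => f x.1 x.2) ∧
    ∀ p q : Fin 24, LeaveAdj B p q ↔
      ∃ i k, (p = f i k ∧ q = f i (k + 1)) ∨ (q = f i k ∧ p = f i (k + 1))

open Finset
open scoped Pointwise

section Development

variable {G ι α : Type*} [AddGroup G] [Fintype G] [AddAction G α] [Fintype ι] [DecidableEq α]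

variable (G) in
/-- The development of a family `D` of base blocks under a group `G` acting on the points:
the set of all translates `g +ᵥ D i`. -/
def development (D : ι → Finset α) : Finset (Finset α) :=
  univ.image fun x : G × ι => x.1 +ᵥ D x.2

variable {D : ι → Finset α}

theorem mem_development {b : Finset α} : b ∈ development G D ↔ ∃ (g : G) (i : ι), g +ᵥ D i = b := by
  simp only [development, mem_image, mem_univ, true_and, Prod.exists]

theorem card_of_mem_development {k : ℕ} (hD : ∀ i, #(D i) = k) : ∀ b ∈ development G D, #b = k := by
  intro b hb
  obtain ⟨g, i, rfl⟩ := mem_development.mp hb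
  rw [card_vadd_finset, hD]

theorem exists_mem_development_pair_iff {p q : α} :
    (∃ b ∈ development G D, p ∈ b ∧ q ∈ b) ↔ ∃ (g : G) (i : ι), g +ᵥ p ∈ D i ∧ g +ᵥ q ∈ D i := by
  constructor
  · rintro ⟨b, hb, hp, hq⟩
    obtain ⟨g, i, rfl⟩ := mem_development.mp hb
    exact ⟨-g, i, neg_vadd_mem_iff.mpr hp, neg_vadd_mem_iff.mpr hq⟩
  · rintro ⟨g, i, hp, hq⟩
    exact ⟨-g +ᵥ D i, mem_development.mpr ⟨-g, i, rfl⟩,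
      mem_neg_vadd_finset_iff.mpr hp, mem_neg_vadd_finset_iff.mpr hq⟩

theorem pairwise_development_card_inter_le {m : ℕ}
    (hD : ∀ (g : G) (i j : ι), g +ᵥ D i ≠ D j → #((g +ᵥ D i) ∩ D j) ≤ m) :
    (development G D : Set (Finset α)).Pairwise fun b₁ b₂ => #(b₁ ∩ b₂) ≤ m := by
  intro b₁ hb₁ b₂ hb₂ hne
  obtain ⟨g, i, rfl⟩ := mem_development.mp hb₁
  obtain ⟨h, j, rfl⟩ := mem_development.mp hb₂
  have htranslate : g +ᵥ D i = h +ᵥ ((-h + g) +ᵥ D i) := by rw [vadd_vadd, add_neg_cancel_left]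
  rw [htranslate] at hne ⊢
  rw [← vadd_finset_inter, card_vadd_finset]
  exact hD _ i j fun heq => hne (congrArg (h +ᵥ ·) heq)

end Development

theorem isPacking_of_pairwise_card_inter_le_one {B : Finset (Finset (Fin 24))}
    (hcard : ∀ b ∈ B, #b = 4)
    (hinter : (B : Set (Finset (Fin 24))).Pairwise fun b₁ b₂ => #(b₁ ∩ b₂) ≤ 1) :
    IsPacking B := by
  refine ⟨hcard, fun p q hpq b₁ hb₁ b₂ hb₂ hp₁ hq₁ hp₂ hq₂ => ?_⟩
  by_contra hne
  exact hpq (card_le_one.mp (hinter hb₁ hb₂ hne) p (mem_inter.mpr ⟨hp₁, hp₂⟩) q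
    (mem_inter.mpr ⟨hq₁, hq₂⟩))

theorem leaveAdj_development_iff {G ι : Type*} [AddGroup G] [Fintype G] [AddAction G (Fin 24)]
    [Fintype ι] {D : ι → Finset (Fin 24)} {p q : Fin 24} :
    LeaveAdj (development G D) p q ↔
      p ≠ q ∧ ¬∃ (g : G) (i : ι), g +ᵥ p ∈ D i ∧ g +ᵥ q ∈ D i := by
  rw [← exists_mem_development_pair_iff]
  simp only [LeaveAdj, not_exists, not_and]

section Cycles

variable {α : Type*} {σ : α → α} {L : List ℕ} [∀ i, NeZero (L.get i)] {x : Fin L.length → α}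

theorem iterate_zmod_val_add_one {n : ℕ} [NeZero n] {a : α} (ha : Function.IsPeriodicPt σ n a)
    (k : ZMod n) : σ^[(k + 1).val] a = σ (σ^[k.val] a) := by
  rw [ZMod.val_add, ha.iterate_mod_apply, add_comm, Function.iterate_add_apply,
    ZMod.val_one_eq_one_mod, (ha.apply_iterate k.val).iterate_mod_apply, Function.iterate_one]

theorem bijective_iterate_zmod_val [Fintype α] (hL : L.sum = Fintype.card α)
    (hx : ∀ i, Function.IsPeriodicPt σ (L.get i) (x i)) (hcover : ∀ p, ∃ i k, σ^[k] (x i) = p) :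
    Function.Bijective fun y : Σ i, ZMod (L.get i) => σ^[y.2.val] (x y.1) := by
  rw [Fintype.bijective_iff_surjective_and_card]
  constructor
  · intro p
    obtain ⟨i, k, rfl⟩ := hcover p
    refine ⟨⟨i, k⟩, ?_⟩
    simp only [ZMod.val_natCast, (hx i).iterate_mod_apply]
  · simp only [Fintype.card_sigma, ZMod.card, List.get_eq_getElem, Fin.sum_univ_getElem, hL]

end Cycles

theorem leaveIsCycleType_of_iterate {B : Finset (Finset (Fin 24))} {σ : Fin 24 → Fin 24}
    {L : List ℕ} [∀ i, NeZero (L.get i)] {x : Fin L.length → Fin 24} (hL : L.sum = 24)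
    (hadj : ∀ p q, LeaveAdj B p q ↔ q = σ p ∨ p = σ q)
    (hx : ∀ i, Function.IsPeriodicPt σ (L.get i) (x i)) (hcover : ∀ p, ∃ i k, σ^[k] (x i) = p) :
    LeaveIsCycleType B L := by
  have hbij := bijective_iterate_zmod_val (hL.trans (Fintype.card_fin 24).symm) hx hcover
  refine ⟨fun i k => σ^[k.val] (x i), hbij, fun p q => ?_⟩
  simp only [hadj, iterate_zmod_val_add_one (hx _)]
  constructor
  · rintro (rfl | rfl)
    · obtain ⟨⟨i, k⟩, rfl⟩ := hbij.surjective p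
      exact ⟨i, k, Or.inl ⟨rfl, rfl⟩⟩
    · obtain ⟨⟨i, k⟩, rfl⟩ := hbij.surjective q
      exact ⟨i, k, Or.inr ⟨rfl, rfl⟩⟩
  · rintro ⟨i, k, ⟨rfl, rfl⟩ | ⟨rfl, rfl⟩⟩
    · exact Or.inl rfl
    · exact Or.inr rfl

/-- The twelve base blocks of the packing, found by a computer search; those in the first row are
the three that are fixed by translation by `12`. -/
def baseBlock : Fin 12 → Finset (Fin 24) :=
  ![{0, 5, 12, 17}, {1, 10, 13, 22}, {2, 9, 14, 21},
    {0, 1, 7, 20}, {0, 3, 13, 16}, {0, 4, 11, 21}, {0, 6, 14, 15}, {0, 10, 19, 23},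
    {1, 2, 8, 11}, {1, 3, 21, 23}, {2, 10, 15, 16}, {2, 17, 22, 23}]

/-- The multiples of `6`, as the subgroup of elements killed by `4`, so that membership is
decidable by computation. -/
abbrev translations : AddSubgroup (Fin 24) :=
  (nsmulAddMonoidHom 4).ker

/-- The packing: all translates of the base blocks by multiples of `6`. -/
def packing : Finset (Finset (Fin 24)) :=
  development translations baseBlock

/-- The successor of a point on its cycle of the leave, for the orientation in which even points
move by `2` and odd points by `8`. -/
def leaveSucc (p : Fin 24) : Fin 24 :=
  if Even p.val then p + 2 else p + 8

/-- A point on each cycle of the leave: one on each triangle of odd points, and `0` on the cycle of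
the even points. -/
def leaveStart : Fin [3, 3, 3, 3, 12].length → Fin 24 :=
  ![1, 3, 5, 7, 0]

theorem card_baseBlock : ∀ i, #(baseBlock i) = 4 := by
  decide +kernel

theorem card_translate_inter_baseBlock_le_one :
    ∀ (g : translations) (i j : Fin 12),
      g +ᵥ baseBlock i ≠ baseBlock j → #((g +ᵥ baseBlock i) ∩ baseBlock j) ≤ 1 := by
  decide +kernel

theorem isPacking_packing : IsPacking packing :=
  isPacking_of_pairwise_card_inter_le_one (card_of_mem_development card_baseBlock)
    (pairwise_development_card_inter_le card_translate_inter_baseBlock_le_one)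

theorem card_packing : #packing = 42 := by
  decide +kernel

theorem not_covered_iff_leaveSucc : ∀ p q : Fin 24,
    (p ≠ q ∧ ¬∃ (g : translations) (i : Fin 12), g +ᵥ p ∈ baseBlock i ∧ g +ᵥ q ∈ baseBlock i) ↔
      q = leaveSucc p ∨ p = leaveSucc q := by
  decide +kernel

theorem leaveAdj_packing_iff (p q : Fin 24) :
    LeaveAdj packing p q ↔ q = leaveSucc p ∨ p = leaveSucc q :=
  leaveAdj_development_iff.trans (not_covered_iff_leaveSucc p q)

theorem isPeriodicPt_leaveSucc_leaveStart :
    ∀ i, Function.IsPeriodicPt leaveSucc ([3, 3, 3, 3, 12].get i) (leaveStart i) := by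
  decide +kernel

theorem exists_iterate_leaveSucc_leaveStart :
    ∀ p, ∃ i, ∃ k < 12, leaveSucc^[k] (leaveStart i) = p := by
  decide +kernel

theorem leaveIsCycleType_packing : LeaveIsCycleType packing [3, 3, 3, 3, 12] := by
  have hlength : ∀ i, NeZero ([3, 3, 3, 3, 12].get i) := fun i => ⟨by revert i; decide⟩
  refine leaveIsCycleType_of_iterate (by decide) leaveAdj_packing_iff
    isPeriodicPt_leaveSucc_leaveStart fun p => ?_
  obtain ⟨i, k, -, hk⟩ := exists_iterate_leaveSucc_leaveStart p
  exact ⟨i, k, hk⟩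

/-- There is a 2-(24,4,1) packing with 42 blocks whose leave is a vertex-disjoint
union of cycles of lengths [3, 3, 3, 3, 12], covering all 24 points. -/
theorem exists_max_packing_with_leave_type :
    ∃ B : Finset (Finset (Fin 24)), IsPacking B ∧ B.card = 42 ∧
      LeaveIsCycleType B [3, 3, 3, 3, 12] :=
  ⟨packing, isPacking_packing, card_packing, leaveIsCycleType_packing⟩
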